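/- Let X be a KU-algebra, d a derivation of X, and μ, β fuzzy sets on X such that the Cartesian product μ × β, defined by (μ × β)(x, y) = min(μ(x), β(y)), is a fuzzy left derivations KU-ideal of the product KU-algebra X × X with respect to the self map D(x, y) = (d(x), d(y)). Then either μ is a fuzzy left derivations KU-ideal of X with respect to d, or β is a fuzzy left derivations KU-ideal of X with respect to d. -/

import Mathlib

/-!
Write `m = min (μ 𝟎) (β 𝟎)`. The first ideal condition on `μ × β` says
`min (μ x) (β y) ≤ m` for all `x, y`, so either `μ ≤ m` everywhere or `β ≤ m` everywhere:
otherwise a point violating each bound would give a pair violating the condition.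
If `μ ≤ m`, then `μ` attains its maximum at `𝟎` and `μ ≤ β 𝟎`. Since a derivation fixes `𝟎`,
the second ideal condition evaluated at points `(x, 𝟎)` only involves the values `β 𝟎`, which
drop out of the minima, leaving the ideal condition for `μ`. The other case is symmetric.
-/

/-- A KU-algebra: a set `X` with a binary operation `⋆` and a constant `𝟎` satisfying
(KU1) `(x⋆y)⋆((y⋆z)⋆(x⋆z)) = 𝟎`, (KU2) `x⋆𝟎 = 𝟎`, (KU3) `𝟎⋆x = x`,
(KU4) `x⋆y = 𝟎` and `y⋆x = 𝟎` imply `x = y`. -/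
class KUAlgebra (X : Type*) where
  star : X → X → X
  zero : X
  ku1 : ∀ x y z : X, star (star x y) (star (star y z) (star x z)) = zero
  ku2 : ∀ x : X, star x zero = zero
  ku3 : ∀ x : X, star zero x = x
  ku4 : ∀ x y : X, star x y = zero → star y x = zero → x = y

infixl:70 " ⋆ " => KUAlgebra.star
notation "𝟎" => KUAlgebra.zero

/-- The order `x ≤ y ↔ y ⋆ x = 𝟎` on a KU-algebra. -/
def KUle {X : Type*} [KUAlgebra X] (x y : X) : Prop := y ⋆ x = 𝟎

/-- `x ∧ y := (x ⋆ y) ⋆ y` in a KU-algebra. -/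
def KUwedge {X : Type*} [KUAlgebra X] (x y : X) : X := (x ⋆ y) ⋆ y

/-- An (ℓ,r)-derivation: `d(x⋆y) = (d(x)⋆y) ∧ (x⋆d(y))`. -/
def IsLRDeriv {X : Type*} [KUAlgebra X] (d : X → X) : Prop :=
  ∀ x y : X, d (x ⋆ y) = KUwedge (d x ⋆ y) (x ⋆ d y)

/-- An (r,ℓ)-derivation: `d(x⋆y) = (x⋆d(y)) ∧ (d(x)⋆y)`. -/
def IsRLDeriv {X : Type*} [KUAlgebra X] (d : X → X) : Prop :=
  ∀ x y : X, d (x ⋆ y) = KUwedge (x ⋆ d y) (d x ⋆ y)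

/-- A derivation is both an (ℓ,r)- and an (r,ℓ)-derivation. -/
def IsDeriv {X : Type*} [KUAlgebra X] (d : X → X) : Prop := IsLRDeriv d ∧ IsRLDeriv d

/-- A fuzzy left derivations KU-ideal of `X` with respect to a self map `d`:
a fuzzy set `μ : X → [0,1]` with `μ 𝟎 ≥ μ x` and
`μ (d (x ⋆ z)) ≥ min (μ (d x ⋆ (y ⋆ z))) (μ (d y))`. -/
def IsFuzzyLeftDerivKUIdeal {X : Type*} [KUAlgebra X] (d : X → X) (μ : X → ℝ) : Prop :=
  (∀ x : X, μ x ∈ Set.Icc (0 : ℝ) 1) ∧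
  (∀ x : X, μ 𝟎 ≥ μ x) ∧
  (∀ x y z : X, μ (d (x ⋆ z)) ≥ min (μ (d x ⋆ (y ⋆ z))) (μ (d y)))

/-- A fuzzy right derivations KU-ideal of `X` with respect to a self map `d`:
a fuzzy set `μ : X → [0,1]` with `μ 𝟎 ≥ μ x` and
`μ (d (x ⋆ z)) ≥ min (μ (x ⋆ d (y ⋆ z))) (μ (d y))`. -/
def IsFuzzyRightDerivKUIdeal {X : Type*} [KUAlgebra X] (d : X → X) (μ : X → ℝ) : Prop :=
  (∀ x : X, μ x ∈ Set.Icc (0 : ℝ) 1) ∧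
  (∀ x : X, μ 𝟎 ≥ μ x) ∧
  (∀ x y z : X, μ (d (x ⋆ z)) ≥ min (μ (x ⋆ d (y ⋆ z))) (μ (d y)))

/-- The product of two KU-algebras, with componentwise operation and constant `(𝟎, 𝟎)`. -/
instance instKUProd {X Y : Type*} [KUAlgebra X] [KUAlgebra Y] : KUAlgebra (X × Y) where
  star p q := (p.1 ⋆ q.1, p.2 ⋆ q.2)
  zero := (𝟎, 𝟎)
  ku1 p q r := by
    simp only [Prod.mk.injEq]
    exact ⟨KUAlgebra.ku1 _ _ _, KUAlgebra.ku1 _ _ _⟩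
  ku2 p := by
    simp only [Prod.mk.injEq]
    exact ⟨KUAlgebra.ku2 _, KUAlgebra.ku2 _⟩
  ku3 p := Prod.ext (KUAlgebra.ku3 _) (KUAlgebra.ku3 _)
  ku4 p q h1 h2 := by
    rw [Prod.ext_iff] at h1 h2
    exact Prod.ext (KUAlgebra.ku4 _ _ h1.1 h2.1) (KUAlgebra.ku4 _ _ h1.2 h2.2)

theorem IsLRDeriv.map_zero {X : Type*} [KUAlgebra X] {d : X → X} (hd : IsLRDeriv d) :
    d (𝟎 : X) = 𝟎 := by
  have self (a : X) : a ⋆ a = 𝟎 := by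
    have := KUAlgebra.ku1 (𝟎 : X) 𝟎 a
    simpa only [KUAlgebra.ku3] using this
  have h := hd 𝟎 𝟎
  simpa only [KUwedge, KUAlgebra.ku2, KUAlgebra.ku3, self] using h

/-- If the Cartesian product `(μ × β)(x,y) = min (μ x) (β y)` of two fuzzy sets is a
fuzzy left derivations KU-ideal of `X × X` with respect to `D(x,y) = (d x, d y)`, where
`d` is a derivation, then `μ` or `β` is a fuzzy left derivations KU-ideal of `X` with
respect to `d`. -/
theorem product_ideal_component_ideal {X : Type*} [KUAlgebra X]
    (d : X → X) (hd : IsDeriv d) (μ β : X → ℝ)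
    (hμ : ∀ x : X, μ x ∈ Set.Icc (0 : ℝ) 1) (hβ : ∀ x : X, β x ∈ Set.Icc (0 : ℝ) 1)
    (h : IsFuzzyLeftDerivKUIdeal (X := X × X) (fun p => (d p.1, d p.2))
      (fun p => min (μ p.1) (β p.2))) :
    IsFuzzyLeftDerivKUIdeal d μ ∨ IsFuzzyLeftDerivKUIdeal d β := by
  obtain ⟨-, h0, h1⟩ := h
  have d0 : d (𝟎 : X) = 𝟎 := hd.1.map_zero
  have h0' (x y : X) : min (μ x) (β y) ≤ min (μ 𝟎) (β 𝟎) := h0 (x, y)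
  have h1' (x y z x' y' z' : X) :
      min (min (μ (d x ⋆ (y ⋆ z))) (β (d x' ⋆ (y' ⋆ z')))) (min (μ (d y)) (β (d y'))) ≤
        min (μ (d (x ⋆ z))) (β (d (x' ⋆ z'))) := h1 (x, x') (y, y') (z, z')
  by_cases hm : ∀ x, μ x ≤ min (μ 𝟎) (β 𝟎)
  · left
    refine ⟨hμ, fun x => (hm x).trans (min_le_left _ _), fun x y z => ?_⟩
    have hle (x : X) : μ x ≤ β 𝟎 := (hm x).trans (min_le_right _ _)
    have := h1' x y z 𝟎 𝟎 𝟎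
    simpa only [KUAlgebra.ku3, d0, min_eq_left (hle _)] using this
  · right
    push Not at hm
    obtain ⟨a, ha⟩ := hm
    have hb (y : X) : β y ≤ min (μ 𝟎) (β 𝟎) :=
      (min_le_iff.mp (h0' a y)).resolve_left ha.not_ge
    refine ⟨hβ, fun y => (hb y).trans (min_le_right _ _), fun x y z => ?_⟩
    have hle (x : X) : β x ≤ μ 𝟎 := (hb x).trans (min_le_left _ _)
    have := h1' 𝟎 𝟎 𝟎 x y z
    simpa only [KUAlgebra.ku3, d0, min_eq_right (hle _)] using this
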